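/- Let γ ∈ (0, 1), ε ∈ [0, 1], and p ∈ (0, 1). Define c(p) = (2γp + 4γ(1 − ε)(1 − p)) / (p + 4(1 − p)). If p < (4 − 4γ(1 − ε)) / (3 + 2γ − 4γ(1 − ε)), then |c(p)| < 1, and consequently the sequence defined by θᵗ⁺¹ = c(p) θᵗ converges to 0 for every θ⁰ ∈ ℝ. Moreover, the threshold (4 − 4γ(1 − ε)) / (3 + 2γ − 4γ(1 − ε)) is strictly positive, so such a convergent update distribution always exists. -/

import Mathlib

open Filter

/-- The threshold is positive for all `γ`, `ε`, with no hypothesis on `p`. -/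
theorem threshold_pos (γ ε : ℝ) (hγ : γ ∈ Set.Ioo (0 : ℝ) 1) (hε : ε ∈ Set.Icc (0 : ℝ) 1) :
    0 < 3 + 2 * γ - 4 * γ * (1 - ε) ∧
      0 < (4 - 4 * γ * (1 - ε)) / (3 + 2 * γ - 4 * γ * (1 - ε)) := by
  obtain ⟨h0, h1⟩ := hγ
  obtain ⟨e0, e1⟩ := hε
  have hm : 0 ≤ γ * ε := mul_nonneg h0.le e0
  have hd : 0 < 3 + 2 * γ - 4 * γ * (1 - ε) := by nlinarith
  exact ⟨hd, div_pos (by nlinarith) hd⟩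

theorem stmt_15 (γ ε p : ℝ) (hγ : γ ∈ Set.Ioo (0 : ℝ) 1) (hε : ε ∈ Set.Icc (0 : ℝ) 1)
    (hp : p ∈ Set.Ioo (0 : ℝ) 1)
    (c : ℝ) (hc : c = (2 * γ * p + 4 * γ * (1 - ε) * (1 - p)) / (p + 4 * (1 - p)))
    (hthr : p < (4 - 4 * γ * (1 - ε)) / (3 + 2 * γ - 4 * γ * (1 - ε))) :
    |c| < 1 ∧
      (∀ θ0 : ℝ,
        Tendsto (fun t : ℕ => (fun x : ℝ => c * x)^[t] θ0) atTop (nhds 0)) ∧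
      0 < (4 - 4 * γ * (1 - ε)) / (3 + 2 * γ - 4 * γ * (1 - ε)) := by
  obtain ⟨hd, hpos⟩ := threshold_pos γ ε hγ hε
  obtain ⟨h0, h1⟩ := hγ
  obtain ⟨e0, e1⟩ := hε
  obtain ⟨p0, p1⟩ := hp
  have hD : 0 < p + 4 * (1 - p) := by linarith
  have hc1 : |c| < 1 := by
    have hee : 0 ≤ 1 - ε := by linarith
    have hpp : 0 ≤ 1 - p := by linarith
    have hc0 : 0 ≤ c := by rw [hc]; positivity
    rw [abs_of_nonneg hc0, hc, div_lt_one hD]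
    rw [lt_div_iff₀ hd] at hthr
    linarith
  refine ⟨hc1, fun θ0 => ?_, hpos⟩
  have hit : ∀ t : ℕ, (fun x : ℝ => c * x)^[t] θ0 = c ^ t * θ0 := by
    intro t
    induction t with
    | zero => simp
    | succ k ih => rw [Function.iterate_succ_apply', ih, pow_succ]; ring
  simp only [hit]
  simpa using (tendsto_pow_atTop_nhds_zero_of_abs_lt_one hc1).mul_const θ0
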